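/- Let n ≥ 2 and let A : ℝ^{n+3} → ℝ^{n+3} be an invertible linear map such that for all x ∈ ℝ^{n+3}, ⟨x,x⟩ = 0 if and only if ⟨Ax,Ax⟩ = 0. Then there is a constant c > 0 such that ⟨Ax, Ax⟩ = c·⟨x,x⟩ for all x ∈ ℝ^{n+3}; equivalently, A is a nonzero scalar multiple of an orthogonal transformation in O(n+1,2). Consequently every Lie sphere transformation is induced by an element of O(n+1,2). -/

import Mathlib

/-!
Write `Q x = lieProd x x` and `Q' x = Q (A x)`. Let `e` be the first basis vector, `e'` the last
one and let `w` be orthogonal to both, so that `Q w = r ^ 2` with `r` the Euclidean norm of `w`.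
The vectors `r e ± w` and `r e' ± w` are lightlike, so `Q'` vanishes on them. This forces `e` and
`e'` to be orthogonal to `w` for the polar form of `Q'`, and `Q' w = -Q' e * r ^ 2`
(`eq_of_null_pair`). Comparing on one unit vector `w` gives `Q' e = Q' e'`, and the lightlike
vector `e + e' + √2 w`, for that `w`, then shows that `e` and `e'` are orthogonal for `Q'`. Decomposing an
arbitrary vector as `s e + t e' + w` yields `Q' = c Q` with `c = -Q' e`.

For the sign of `c`, note that `n + 3 > 4`, so some `x ≠ 0` has both its own and its image's first
and last coordinates equal to zero. Then `Q x > 0` and `Q (A x) > 0`, whence `c > 0`.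
-/

/-- The Lie scalar product on `ℝ^{n+3}`:
`⟨x,y⟩ = -x₁y₁ + x₂y₂ + ⋯ + x_{n+2}y_{n+2} - x_{n+3}y_{n+3}`. -/
def lieProd {n : ℕ} (x y : Fin (n + 3) → ℝ) : ℝ :=
  (∑ i, x i * y i) - 2 * x 0 * y 0 - 2 * x (Fin.last (n + 2)) * y (Fin.last (n + 2))

lemma lieProd_comm {n : ℕ} (x y : Fin (n + 3) → ℝ) : lieProd x y = lieProd y x := by
  simp only [lieProd, mul_comm (x _) (y _)]
  ring

lemma lieProd_add_left {n : ℕ} (x y z : Fin (n + 3) → ℝ) :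
    lieProd (x + y) z = lieProd x z + lieProd y z := by
  simp only [lieProd, Pi.add_apply, add_mul, Finset.sum_add_distrib]
  ring

lemma lieProd_smul_left {n : ℕ} (a : ℝ) (x z : Fin (n + 3) → ℝ) :
    lieProd (a • x) z = a * lieProd x z := by
  simp only [lieProd, Pi.smul_apply, smul_eq_mul, mul_assoc, ← Finset.mul_sum]
  ring

lemma lieProd_add_right {n : ℕ} (x y z : Fin (n + 3) → ℝ) :
    lieProd z (x + y) = lieProd z x + lieProd z y := by
  rw [lieProd_comm, lieProd_add_left, lieProd_comm x, lieProd_comm y]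

lemma lieProd_smul_right {n : ℕ} (a : ℝ) (x z : Fin (n + 3) → ℝ) :
    lieProd z (a • x) = a * lieProd z x := by
  rw [lieProd_comm, lieProd_smul_left, lieProd_comm x]

lemma lieProd_comb {n : ℕ} (s t : ℝ) (x y w : Fin (n + 3) → ℝ) :
    lieProd (s • x + t • y + w) (s • x + t • y + w) =
      s ^ 2 * lieProd x x + t ^ 2 * lieProd y y + lieProd w w
        + 2 * s * t * lieProd x y + 2 * s * lieProd x w + 2 * t * lieProd y w := by
  simp only [lieProd_add_left, lieProd_add_right, lieProd_smul_left, lieProd_smul_right,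
    lieProd_comm w, lieProd_comm y x]
  ring

/-- The Lie product is positive definite on the span of the middle basis vectors. -/
lemma lieProd_pos {n : ℕ} {w : Fin (n + 3) → ℝ} (h0 : w 0 = 0) (hl : w (Fin.last (n + 2)) = 0)
    (hw : w ≠ 0) : 0 < lieProd w w := by
  obtain ⟨i, hi⟩ := Function.ne_iff.1 hw
  have : 0 < ∑ i, w i * w i :=
    Finset.sum_pos' (fun i _ => mul_self_nonneg _) ⟨i, Finset.mem_univ _, mul_self_pos.2 hi⟩
  simpa [lieProd, h0, hl] using this

lemma lieProd_single_zero {n : ℕ} (y : Fin (n + 3) → ℝ) :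
    lieProd (Pi.single 0 1) y = -y 0 := by
  simp [lieProd, Pi.single_apply, Fin.last_eq_zero_iff]
  ring

lemma lieProd_single_last {n : ℕ} (y : Fin (n + 3) → ℝ) :
    lieProd (Pi.single (Fin.last (n + 2)) 1) y = -y (Fin.last (n + 2)) := by
  have h : (0 : Fin (n + 3)) ≠ Fin.last (n + 2) := by simp [Fin.ext_iff]
  simp [lieProd, Pi.single_apply, h]
  ring

/-- If `e` is a negative unit vector orthogonal to the positive vector `w`, then the lightlike
vectors `r e ± w`, where `r ^ 2 = ⟨w, w⟩`, determine the pullback of the Lie form on the span of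
`e` and `w` up to its value at `e`. -/
lemma eq_of_null_pair {n : ℕ} (A : (Fin (n + 3) → ℝ) →ₗ[ℝ] (Fin (n + 3) → ℝ))
    (hA : ∀ x, lieProd x x = 0 → lieProd (A x) (A x) = 0) {e w : Fin (n + 3) → ℝ}
    (he : lieProd e e = -1) (hew : lieProd e w = 0) (hw : 0 < lieProd w w) :
    lieProd (A e) (A w) = 0 ∧ lieProd (A w) (A w) = -lieProd (A e) (A e) * lieProd w w := by
  have hr := Real.sq_sqrt hw.le
  have hr0 := Real.sqrt_pos.2 hw
  set r := √(lieProd w w)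
  have key (s : ℝ) (hs : s ^ 2 = lieProd w w) :
      s ^ 2 * lieProd (A e) (A e) + lieProd (A w) (A w) + 2 * s * lieProd (A e) (A w) = 0 := by
    have h := hA (s • e + (0 : ℝ) • e + w) (by rw [lieProd_comb, he, hew]; linarith)
    simp only [map_add, map_smul, lieProd_comb] at h
    linarith
  have h1 := key r hr
  have h2 := key (-r) (by rw [neg_sq, hr])
  rw [neg_sq] at h2
  have h3 : r * lieProd (A e) (A w) = 0 := by linarith
  refine ⟨(mul_eq_zero.1 h3).resolve_left hr0.ne', ?_⟩
  rw [← hr]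
  linarith

/-- If an invertible linear map `A` of `ℝ^{n+3}` preserves the set of lightlike
vectors of the Lie scalar product (in both directions), then `A` multiplies the Lie
form by a positive constant, i.e. `A` is a nonzero scalar multiple of an orthogonal
transformation in `O(n+1,2)`. Consequently every Lie sphere transformation is
induced by an element of `O(n+1,2)`. -/
theorem lie_lightcone_preserving (n : ℕ) (hn : 2 ≤ n)
    (A : (Fin (n + 3) → ℝ) →ₗ[ℝ] (Fin (n + 3) → ℝ)) (hA : Function.Bijective A)
    (hcone : ∀ x, lieProd x x = 0 ↔ lieProd (A x) (A x) = 0) :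
    ∃ c : ℝ, 0 < c ∧ ∀ x, lieProd (A x) (A x) = c * lieProd x x := by
  have hnull := fun x => (hcone x).1
  set e : Fin (n + 3) → ℝ := Pi.single 0 1 with he
  set e' : Fin (n + 3) → ℝ := Pi.single (Fin.last (n + 2)) 1 with he'
  have l0 : Fin.last (n + 2) ≠ 0 := by simp [Fin.ext_iff]
  have e0 : e 0 = 1 := by simp [he]
  have el : e (Fin.last (n + 2)) = 0 := by simp [he, l0]
  have e'0 : e' 0 = 0 := by simp [he', l0.symm]
  have e'l : e' (Fin.last (n + 2)) = 1 := by simp [he']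
  have hee : lieProd e e = -1 := by rw [he, lieProd_single_zero, ← he, e0]
  have hee' : lieProd e e' = 0 := by rw [he, lieProd_single_zero, e'0, neg_zero]
  have he'e' : lieProd e' e' = -1 := by rw [he', lieProd_single_last, ← he', e'l]
  have orth (w : Fin (n + 3) → ℝ) (h : w 0 = 0) : lieProd e w = 0 := by
    rw [he, lieProd_single_zero, h, neg_zero]
  have orth' (w : Fin (n + 3) → ℝ) (h : w (Fin.last (n + 2)) = 0) : lieProd e' w = 0 := by
    rw [he', lieProd_single_last, h, neg_zero]
  obtain ⟨u, u0, ul, hu⟩ : ∃ u : Fin (n + 3) → ℝ,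
      u 0 = 0 ∧ u (Fin.last (n + 2)) = 0 ∧ u ≠ 0 :=
    ⟨Pi.single 1 1, by simp, by simp [Fin.ext_iff],
      by simp⟩
  have hupos := lieProd_pos u0 ul hu
  obtain ⟨a1, a2⟩ := eq_of_null_pair A hnull hee (orth u u0) hupos
  obtain ⟨b1, b2⟩ := eq_of_null_pair A hnull he'e' (orth' u ul) hupos
  have hab : lieProd (A e') (A e') = lieProd (A e) (A e) := by
    have := mul_right_cancel₀ hupos.ne' (a2.symm.trans b2)
    linarith
  have hd : lieProd (A e) (A e') = 0 := by
    have hs : √(lieProd u u / 2) ^ 2 = lieProd u u / 2 := Real.sq_sqrt (by linarith)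
    set s := √(lieProd u u / 2)
    -- With this `s`, the vector `s • (e + e') + u` is lightlike.
    have h := hnull (s • e + s • e' + u) (by
      rw [lieProd_comb, hee, he'e', hee', orth u u0, orth' u ul, hs]; ring)
    simp only [map_add, map_smul, lieProd_comb, a1, b1, a2, hab] at h
    have h' : lieProd u u * lieProd (A e) (A e') = 0 := by
      linear_combination h + (-2 * lieProd (A e) (A e) - 2 * lieProd (A e) (A e')) * hs
    exact (mul_eq_zero.1 h').resolve_left hupos.ne'
  have main (x) : lieProd (A x) (A x) = -lieProd (A e) (A e) * lieProd x x := by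
    obtain ⟨s, t, w, w0, wl, rfl⟩ : ∃ (s t : ℝ) (w : Fin (n + 3) → ℝ),
        w 0 = 0 ∧ w (Fin.last (n + 2)) = 0 ∧ x = s • e + t • e' + w :=
      ⟨x 0, x (Fin.last (n + 2)), x - (x 0 • e + x (Fin.last (n + 2)) • e'),
        by simp [e0, e'0], by simp [el, e'l], by abel⟩
    have hw : lieProd (A e) (A w) = 0 ∧ lieProd (A e') (A w) = 0 ∧
        lieProd (A w) (A w) = -lieProd (A e) (A e) * lieProd w w := by
      rcases eq_or_ne w 0 with rfl | hw
      · simp [lieProd]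
      · have hwpos := lieProd_pos w0 wl hw
        have h := eq_of_null_pair A hnull hee (orth w w0) hwpos
        exact ⟨h.1, (eq_of_null_pair A hnull he'e' (orth' w wl) hwpos).1, h.2⟩
    obtain ⟨h1, h2, h3⟩ := hw
    simp only [map_add, map_smul, lieProd_comb, h1, h2, h3, hd, hab, hee, he'e', hee',
      orth w w0, orth' w wl]
    ring
  refine ⟨_, ?_, main⟩
  -- Four linear conditions on a space of dimension `n + 3 ≥ 5` have a nonzero solution.
  let p : Fin 2 → Fin (n + 3) := ![0, Fin.last (n + 2)]
  let L : (Fin (n + 3) → ℝ) →ₗ[ℝ] (Fin 2 → ℝ) × (Fin 2 → ℝ) :=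
    (LinearMap.funLeft ℝ ℝ p).prod (LinearMap.funLeft ℝ ℝ p ∘ₗ A)
  have hker : LinearMap.ker L ≠ ⊥ := LinearMap.ker_ne_bot_of_finrank_lt (by simp; omega)
  obtain ⟨x, hx, hx0⟩ := (Submodule.ne_bot_iff _).1 hker
  have hL : L x = 0 := hx
  have g1 := congrFun (congrArg Prod.fst hL)
  have g2 := congrFun (congrArg Prod.snd hL)
  have hxpos : 0 < lieProd x x := lieProd_pos (g1 0) (g1 1) hx0
  have hAx : A x ≠ 0 := fun h => hx0 (hA.1 (h.trans (map_zero A).symm))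
  have hAxpos : 0 < lieProd (A x) (A x) := lieProd_pos (g2 0) (g2 1) hAx
  rw [main x] at hAxpos
  exact pos_of_mul_pos_left hAxpos hxpos.le
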